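/- arXiv:2007.03554 — 2 statements merged into one kernel-verified Lean document; each statement's English description precedes it below -/
import Mathlib

section
/- Let p be a prime, H a finite group, and G = (H_1 × ⋯ × H_p) ⋊ ⟨x⟩, where each H_i ≅ H and x has order p and cyclically permutes the factors H_1, …, H_p. Then spr_G(x) ≤ 1/n_p(H)^{p-1}, where n_p(H) is the number of Sylow p-subgroups of H. -/
open Subgroup

/-- `H` is normal in `K` (both subgroups of an ambient group). -/
def NormalIn {G : Type*} [Group G] (H K : Subgroup G) : Prop :=
  H ≤ K ∧ (H.subgroupOf K).Normal

/-- `H` is subnormal in `K`: there is a chain `H = H₀ ⊴ H₁ ⊴ ⋯ ⊴ Hₙ = K`. -/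
def IsSubnormalIn {G : Type*} [Group G] (H K : Subgroup G) : Prop :=
  Relation.ReflTransGen NormalIn H K

/-- The Wielandt subnormalizer of `⟨x⟩` in `G`. -/
def subnormalizerSet {G : Type*} [Group G] (x : G) : Set G :=
  {g : G | IsSubnormalIn (zpowers x) (zpowers x ⊔ zpowers g)}

/-- `spr_G(x) = |S_G(x)|/|G|`. -/
noncomputable def spr {G : Type*} [Group G] (x : G) : ℚ :=
  (Nat.card (subnormalizerSet x) : ℚ) / (Nat.card G : ℚ)


/-- `x` is a `p`-element: its order is a power of `p`. -/
def IsPElement (p : ℕ) {G : Type*} [Group G] (x : G) : Prop :=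
  ∃ k : ℕ, orderOf x = p ^ k

/-- The cyclic-shift automorphism action of `ZMod p` on `ZMod p → H`:
`(shiftHom p H c) f i = f (i + c)`. -/
def shiftHom (p : ℕ) (H : Type*) [Group H] :
    Multiplicative (ZMod p) →* MulAut (ZMod p → H) :=
  MonoidHom.mk'
    (fun c => MulEquiv.arrowCongr (Equiv.addRight c.toAdd).symm (MulEquiv.refl H))
    (by
      intro a b
      ext f i
      simp [MulEquiv.arrowCongr, add_assoc])

/-! Casolo's counting theorem: in a finite group `G`, the number of elements normalizing some
`p`-subgroup that contains `U` is `|G| / n_p(G)` times the number of Sylow `p`-subgroups containing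
`U`. To prove it for every `K ≥ U` in place of `G`, sum both sides over the subgroups `X` between
`U` and `K` with weight `μ(U, X)`, where `μ` is the Möbius function of the subgroup lattice. An `h`
that does not normalize `U` contributes `0`, by Rota's theorem on closure operators, and
`μ(U, Q) = 0` whenever the `p`-group `Q` does not normalize `U`; so both sums take the same value
for `K` and for `N_K(U)`. By downward induction on `U` only the term `X = U` matters, and in
`N_K(U)`, where `U` is normal, the formula is clear.

If `g = (f, c)` subnormalizes the shift `x`, then `f` normalizes the `p`-group `M = O_p(⟨x, g⟩)`,
which contains `x` and hence all commutators `f⁻¹ · xⁱ f x⁻ⁱ`. In the coordinate `0` this says that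
`f 0` normalizes a `p`-subgroup of `H` containing every `(f 0)⁻¹ * f i`. By Casolo's theorem, summed
over all tuples of elements `(f 0)⁻¹ * f i` with `i ≠ 0`, there are `|H| * |S| ^ (n - 1)` such `f`
in `H ^ n`, for `S` a Sylow `p`-subgroup of `H`, and `|S| / |H| ≤ 1 / n_p(H)`. -/

section MoebiusFunction

open Finset IncidenceAlgebra

variable (𝕜 : Type*) [Ring 𝕜] {L : Type*} [DecidableEq L]

theorem sum_mu_Icc_filter_closure_eq_eq_zero [PartialOrder L] [LocallyFiniteOrder L]
    [WellFoundedLT L] (c : ClosureOperator L) {U : L} (hU : ¬ c.IsClosed U) (Y : L) :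
    ∑ X ∈ Icc U Y with c X = Y, mu 𝕜 U X = 0 := by
  induction Y using WellFoundedLT.induction with
  | _ Y ih =>
  by_cases hY : c.IsClosed Y
  swap
  · rw [filter_false_of_mem, sum_empty]
    rintro X - rfl
    exact hY (c.isClosed_closure X)
  have total : ∑ X ∈ Icc U Y, mu 𝕜 U X = 0 := by
    rw [sum_Icc_mu_right, if_neg]
    rintro rfl
    exact hU hY
  have maps : ∀ X ∈ Icc U Y, c X ∈ Icc U Y := fun X hX =>
    have ⟨hUX, hXY⟩ := mem_Icc.1 hX
    mem_Icc.2 ⟨hUX.trans (c.le_closure X), c.closure_min hXY hY⟩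
  rw [← sum_fiberwise_of_maps_to maps] at total
  by_cases hUY : U ≤ Y
  swap
  · simp [Icc_eq_empty hUY]
  rw [← total, sum_eq_single_of_mem Y (right_mem_Icc.2 hUY)]
  intro Z hZ hne
  have hZY := (mem_Icc.1 hZ).2
  rw [← ih Z (hZY.lt_of_ne hne)]
  congr 1
  ext X
  simp only [mem_filter, mem_Icc]
  exact ⟨fun ⟨hX, h⟩ => ⟨⟨hX.1, h ▸ c.le_closure X⟩, h⟩,
    fun ⟨hX, h⟩ => ⟨⟨hX.1, hX.2.trans hZY⟩, h⟩⟩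

theorem sum_mu_Icc_filter_closure_eq_zero [PartialOrder L] [LocallyFiniteOrder L]
    [WellFoundedLT L] (c : ClosureOperator L) {U K : L} (hU : ¬ c.IsClosed U) (hK : c.IsClosed K)
    (P : L → Prop) [DecidablePred P] :
    ∑ X ∈ Icc U K with P (c X), mu 𝕜 U X = 0 := by
  have maps : ∀ X ∈ {X ∈ Icc U K | P (c X)}, c X ∈ {Y ∈ Icc U K | P Y} := by
    simp only [mem_filter, mem_Icc]
    exact fun X ⟨⟨hUX, hXK⟩, hP⟩ => ⟨⟨hUX.trans (c.le_closure X), c.closure_min hXK hK⟩, hP⟩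
  rw [← sum_fiberwise_of_maps_to maps]
  refine sum_eq_zero fun Y hY => ?_
  obtain ⟨hUYK, hP⟩ := mem_filter.1 hY
  rw [← sum_mu_Icc_filter_closure_eq_eq_zero 𝕜 c hU Y, filter_filter]
  congr 1
  ext X
  simp only [mem_filter, mem_Icc]
  exact ⟨fun ⟨hX, _, h⟩ => ⟨⟨hX.1, h ▸ c.le_closure X⟩, h⟩,
    fun ⟨hX, h⟩ => ⟨⟨hX.1, hX.2.trans (mem_Icc.1 hUYK).2⟩, h ▸ hP, h⟩⟩

theorem mu_eq_zero_of_forall_lt_inf [SemilatticeInf L] [LocallyFiniteOrder L] [WellFoundedLT L]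
    {U N : L} (hUN : U ≤ N) {Q : L} (hQN : ¬ Q ≤ N) (hQ : ∀ Y ≤ Q, U < Y → U < Y ⊓ N) :
    mu 𝕜 U Q = 0 := by
  classical
  induction Q using WellFoundedLT.induction with
  | _ Q ih =>
  by_cases hUQ : U ≤ Q
  swap
  · exact apply_eq_zero_of_not_le hUQ _
  have hlt : U < Q := hUQ.lt_of_ne (by rintro rfl; exact hQN hUN)
  have sum_all : ∑ X ∈ Icc U Q, mu 𝕜 U X = 0 := by
    rw [sum_Icc_mu_right, if_neg hlt.ne]
  have sum_le : ∑ X ∈ Icc U Q with X ≤ N, mu 𝕜 U X = 0 := by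
    have : {X ∈ Icc U Q | X ≤ N} = Icc U (Q ⊓ N) := by
      ext X
      simp only [mem_filter, mem_Icc, le_inf_iff, and_assoc]
    rw [this, sum_Icc_mu_right, if_neg (hQ Q le_rfl hlt).ne]
  rw [← sum_filter_add_sum_filter_not _ (· ≤ N), sum_le, zero_add] at sum_all
  rw [← sum_all]
  refine (sum_eq_single_of_mem Q (by simp [hUQ, hQN]) fun X hX hne => ?_).symm
  simp only [mem_filter, mem_Icc] at hX
  exact ih X (hX.1.2.lt_of_ne hne) hX.2 fun Y hY => hQ Y (hY.trans hX.1.2)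

end MoebiusFunction

theorem sum_mul_ncard {ι α 𝕜 : Type*} [Fintype α] [Semiring 𝕜] (s : Finset ι) (w : ι → 𝕜)
    (A : ι → Set α) [∀ a, DecidablePred fun i => a ∈ A i] :
    ∑ i ∈ s, w i * (A i).ncard = ∑ a, ∑ i ∈ s with a ∈ A i, w i := by
  classical
  simp_rw [Finset.sum_filter]
  rw [Finset.sum_comm]
  refine Finset.sum_congr rfl fun i _ => ?_
  rw [← Finset.sum_filter, Finset.sum_const, nsmul_eq_mul, Nat.cast_comm,
    Set.ncard_eq_toFinset_card', Set.filter_mem_univ_eq_toFinset]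

section Subnormalizers

variable {G : Type*} [Group G]

/-- `h` *`p`-subnormalizes* `U` if it normalizes some `p`-subgroup containing `U`. For a
`p`-element `x` these are the `h` in the Wielandt subnormalizer of `⟨x⟩`, for `U = ⟨x⟩`. -/
def PSubnormalizes (p : ℕ) (h : G) (U : Subgroup G) : Prop :=
  ∃ Q : Subgroup G, IsPGroup p Q ∧ U ≤ Q ∧ h ∈ normalizer (Q : Set G)

/-- The elements of `K` that `p`-subnormalize `U`; here `U` is meant to be a subgroup of `K`. -/
def pSubnormalizer (p : ℕ) (K U : Subgroup G) : Set G :=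
  {h | h ∈ K ∧ PSubnormalizes p h U}

/-- `P` is a Sylow `p`-subgroup of `K`. Unlike in `Sylow p K`, it is a subgroup of the ambient
group, so that the Sylow subgroups of different `K` can be compared. -/
def IsSylowIn (p : ℕ) (K P : Subgroup G) : Prop :=
  Maximal (fun Q : Subgroup G => IsPGroup p Q ∧ Q ≤ K) P

/-- The operator sending a subgroup to the smallest subgroup above it that `h` normalizes. -/
def normalizedClosure (h : G) : ClosureOperator (Subgroup G) :=
  .ofCompletePred (fun Q => h ∈ normalizer (Q : Set G)) fun s hs => by
    rw [sInf_eq_iInf']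
    exact iInf_normalizer_le_normalizer_iInf _ (mem_iInf.2 fun Q => hs Q Q.2)

variable {p : ℕ} {h : G} {K U P : Subgroup G}

theorem pSubnormalizes_iff_isPGroup_normalizedClosure :
    PSubnormalizes p h U ↔ IsPGroup p (normalizedClosure h U) where
  mp := fun ⟨_, hQ, hUQ, hn⟩ => hQ.to_le ((normalizedClosure h).closure_min hUQ hn)
  mpr hU := ⟨_, hU, (normalizedClosure h).le_closure U, (normalizedClosure h).isClosed_closure U⟩

theorem PSubnormalizes.isPGroup (hU : PSubnormalizes p h U) : IsPGroup p U :=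
  have ⟨_, hQ, hUQ, _⟩ := hU
  hQ.to_le hUQ

theorem pSubnormalizer_eq_of_le_normalizer (hU : IsPGroup p U)
    (hK : K ≤ normalizer (U : Set G)) : pSubnormalizer p K U = K :=
  Set.Subset.antisymm (fun _ h => h.1) fun _ h => ⟨h, U, hU, le_rfl, hK h⟩

theorem IsSylowIn.le_of_le_normalizer (hP : IsSylowIn p K P) (hU : IsPGroup p U) (hUK : U ≤ K)
    (hK : K ≤ normalizer (U : Set G)) : U ≤ P :=
  have hPU : IsPGroup p (P ⊔ U : Subgroup G) :=
    hP.prop.1.to_sup_of_normal_right' hU (hP.prop.2.trans hK)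
  le_sup_right.trans (hP.le_of_ge ⟨hPU, sup_le hP.prop.2 hUK⟩ le_sup_left)

theorem isSylowIn_iff_exists_map_subtype_eq :
    IsSylowIn p K P ↔ ∃ S : Sylow p K, (S : Subgroup K).map K.subtype = P := by
  constructor
  · intro hP
    have map_eq : (P.subgroupOf K).map K.subtype = P := map_subgroupOf_eq_of_le hP.prop.2
    refine ⟨⟨P.subgroupOf K, hP.prop.1.comap_subtype, fun {Q} hQ hle => ?_⟩, map_eq⟩
    have hPQ : P ≤ Q.map K.subtype := map_eq ▸ map_mono hle
    rw [hP.eq_of_le ⟨hQ.map _, map_subtype_le Q⟩ hPQ]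
    exact (comap_map_eq_self_of_injective K.subtype_injective Q).symm
  · rintro ⟨S, rfl⟩
    refine ⟨⟨S.isPGroup'.map _, map_subtype_le _⟩, fun Q hQ hle => ?_⟩
    rw [← S.is_maximal' hQ.1.comap_subtype (map_le_iff_le_comap.1 hle)]
    exact (map_subgroupOf_eq_of_le hQ.2).ge

theorem isSylowIn_top_iff : IsSylowIn p ⊤ P ↔ ∃ S : Sylow p G, S = P where
  mp hP := ⟨⟨P, hP.prop.1, fun hQ hle => (hP.eq_of_le ⟨hQ, le_top⟩ hle).symm⟩, rfl⟩
  mpr := by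
    rintro ⟨S, rfl⟩
    exact ⟨⟨S.isPGroup', le_top⟩, fun Q hQ hle => (S.is_maximal' hQ.1 hle).le⟩

theorem ncard_setOf_isSylowIn (p : ℕ) (K : Subgroup G) :
    {P | IsSylowIn p K P}.ncard = Nat.card (Sylow p K) := by
  simp_rw [isSylowIn_iff_exists_map_subtype_eq]
  exact Set.ncard_range_of_injective fun P Q h => Sylow.ext (map_injective K.subtype_injective h)

theorem ncard_setOf_isSylowIn_top_and_le (p : ℕ) (U : Subgroup G) :
    {P | IsSylowIn p ⊤ P ∧ U ≤ P}.ncard = Nat.card {S : Sylow p G // U ≤ S} := by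
  have image_eq : {P | IsSylowIn p ⊤ P ∧ U ≤ P} = (↑) '' {S : Sylow p G | U ≤ S} := by
    ext P
    simp only [isSylowIn_top_iff, Set.mem_image, Set.mem_ofPred_eq]
    grind
  rw [image_eq, Set.ncard_image_of_injective _ fun _ _ => Sylow.ext]
  rfl

variable [Finite G] [Fact p.Prime]

theorem lt_inf_normalizer_of_isPGroup {Q : Subgroup G} (hQ : IsPGroup p Q) (hUQ : U < Q) :
    U < Q ⊓ normalizer (U : Set G) := by
  have : Group.IsNilpotent Q := hQ.isNilpotent
  have hlt : U.subgroupOf Q < ⊤ :=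
    lt_top_iff_ne_top.2 fun h => hUQ.not_ge (subgroupOf_eq_top.1 h)
  have hgrow := Group.normalizerCondition_of_isNilpotent _ hlt
  rw [← subgroupOf_normalizer_eq hUQ.le] at hgrow
  refine (le_inf hUQ.le le_normalizer).lt_of_ne fun heq => hgrow.ne ?_
  conv_lhs => rw [heq, inf_subgroupOf_left]

theorem isSylowIn_inf_normalizer_iff (hUK : U ≤ K) :
    IsSylowIn p (K ⊓ normalizer (U : Set G)) U ↔ IsSylowIn p K U where
  mp hU := by
    refine ⟨⟨hU.prop.1, hUK⟩, fun Q hQ hle => ?_⟩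
    by_contra hQU
    have hlt := lt_inf_normalizer_of_isPGroup hQ.1 (lt_of_le_not_ge hle hQU)
    exact hlt.not_ge (hU.le_of_ge ⟨hQ.1.to_inf_left, inf_le_inf_right _ hQ.2⟩ hlt.le)
  mpr hU := hU.mono (fun _ hQ => ⟨hQ.1, hQ.2.trans inf_le_left⟩)
    ⟨hU.prop.1, le_inf hUK le_normalizer⟩

theorem IsSylowIn.card_inf_normalizer_mul_ncard (hP : IsSylowIn p K P) :
    Nat.card (K ⊓ normalizer (P : Set G) : Subgroup G) * {P | IsSylowIn p K P}.ncard =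
      Nat.card K := by
  obtain ⟨S, rfl⟩ := isSylowIn_iff_exists_map_subtype_eq.1 hP
  have normalizer_eq : (normalizer (S : Set K)).map K.subtype =
      K ⊓ normalizer ((S : Subgroup K).map K.subtype : Set G) := by
    rw [inf_comm, ← subgroupOf_map_subtype, subgroupOf_normalizer_eq (map_subtype_le _),
      subgroupOf, comap_map_eq_self_of_injective K.subtype_injective]
    rfl
  rw [ncard_setOf_isSylowIn, S.card_eq_index_normalizer, ← normalizer_eq,
    card_map_of_injective K.subtype_injective]
  exact card_mul_index _

theorem ncard_setOf_isSylowIn_pos (p : ℕ) [Fact p.Prime] (K : Subgroup G) :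
    0 < {P | IsSylowIn p K P}.ncard := by
  rw [ncard_setOf_isSylowIn]
  exact Nat.card_pos

section Moebius

open Finset IncidenceAlgebra

variable (𝕜 : Type*) [Ring 𝕜] [DecidableEq (Subgroup G)] [LocallyFiniteOrder (Subgroup G)]

theorem mu_eq_zero_of_isPGroup_of_not_le_normalizer {Q : Subgroup G} (hQ : IsPGroup p Q)
    (hQU : ¬ Q ≤ normalizer (U : Set G)) : mu 𝕜 U Q = 0 :=
  mu_eq_zero_of_forall_lt_inf 𝕜 le_normalizer hQU fun _ hYQ =>
    lt_inf_normalizer_of_isPGroup (hQ.to_le hYQ)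

omit [Fact p.Prime] in
theorem sum_mu_pSubnormalizes_of_notMem_normalizer [DecidablePred (PSubnormalizes p h)] (hK : h ∈ K)
    (hU : h ∉ normalizer (U : Set G)) :
    ∑ X ∈ Icc U K with PSubnormalizes p h X, mu 𝕜 U X = 0 := by
  classical
  simp_rw [pSubnormalizes_iff_isPGroup_normalizedClosure]
  exact sum_mu_Icc_filter_closure_eq_zero 𝕜 (normalizedClosure h) hU (le_normalizer hK)
    fun Q => IsPGroup p Q

theorem sum_mu_pSubnormalizes_inf_normalizer (h : G) (K U : Subgroup G)
    [DecidablePred (PSubnormalizes p h)] :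
    ∑ X ∈ Icc U (K ⊓ normalizer (U : Set G)) with PSubnormalizes p h X, mu 𝕜 U X =
      ∑ X ∈ Icc U K with PSubnormalizes p h X, mu 𝕜 U X := by
  refine sum_subset (filter_subset_filter _ (Icc_subset_Icc_right inf_le_left)) fun X hX hX' => ?_
  simp only [mem_filter, mem_Icc, le_inf_iff] at hX hX'
  exact mu_eq_zero_of_isPGroup_of_not_le_normalizer 𝕜 hX.2.isPGroup
    fun hn => hX' ⟨⟨hX.1.1, hX.1.2, hn⟩, hX.2⟩

theorem sum_mu_mul_ncard_pSubnormalizer (p : ℕ) [Fact p.Prime] (K U : Subgroup G) :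
    ∑ X ∈ Icc U K, mu 𝕜 U X * (pSubnormalizer p K X).ncard =
      ∑ X ∈ Icc U (K ⊓ normalizer (U : Set G)),
        mu 𝕜 U X * (pSubnormalizer p (K ⊓ normalizer (U : Set G)) X).ncard := by
  classical
  have := Fintype.ofFinite G
  rw [sum_mul_ncard, sum_mul_ncard]
  refine sum_congr rfl fun h _ => ?_
  by_cases hK : h ∈ K
  swap
  · simp [pSubnormalizer, hK]
  by_cases hU : h ∈ normalizer (U : Set G)
  · simpa [pSubnormalizer, hK, hU] using (sum_mu_pSubnormalizes_inf_normalizer 𝕜 h K U).symm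
  · simpa [pSubnormalizer, hK, hU] using sum_mu_pSubnormalizes_of_notMem_normalizer 𝕜 hK hU

theorem sum_mu_mul_ncard_isSylowIn_and_le (p : ℕ) (K U : Subgroup G)
    [DecidablePred (IsSylowIn p K)] :
    ∑ X ∈ Icc U K, mu 𝕜 U X * {P | IsSylowIn p K P ∧ X ≤ P}.ncard =
      if IsSylowIn p K U then 1 else 0 := by
  classical
  have := Fintype.ofFinite (Subgroup G)
  have sum_below (P : Subgroup G) (hP : IsSylowIn p K P) :
      ∑ X ∈ Icc U K with X ≤ P, mu 𝕜 U X = if U = P then 1 else 0 := by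
    rw [← sum_Icc_mu_right]
    congr 1
    ext X
    simp only [mem_filter, mem_Icc, and_assoc]
    exact ⟨fun ⟨hUX, _, hXP⟩ => ⟨hUX, hXP⟩,
      fun ⟨hUX, hXP⟩ => ⟨hUX, hXP.trans hP.prop.2, hXP⟩⟩
  rw [sum_mul_ncard]
  calc ∑ P, ∑ X ∈ Icc U K with P ∈ {P | IsSylowIn p K P ∧ X ≤ P}, mu 𝕜 U X
      = ∑ P, if U = P then if IsSylowIn p K P then 1 else 0 else 0 := by
        refine sum_congr rfl fun P _ => ?_
        by_cases hP : IsSylowIn p K P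
        · simpa [hP] using sum_below P hP
        · simp [hP]
    _ = if IsSylowIn p K U then 1 else 0 := by simp

end Moebius

/-- The amount by which the pair `U ≤ K` fails Casolo's formula
`|pSubnormalizer p K U| = |K| / n_p(K) * #{P | P is Sylow in K and U ≤ P}`. -/
noncomputable def casoloDefect (p : ℕ) (K U : Subgroup G) : ℚ :=
  (pSubnormalizer p K U).ncard -
    Nat.card K / {P | IsSylowIn p K P}.ncard * {P | IsSylowIn p K P ∧ U ≤ P}.ncard

omit [Finite G] [Fact p.Prime] in
theorem casoloDefect_eq_zero_of_not_isPGroup (hU : ¬ IsPGroup p U) (K : Subgroup G) :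
    casoloDefect p K U = 0 := by
  have no_element : pSubnormalizer p K U = ∅ :=
    Set.eq_empty_of_forall_notMem fun _ h => hU h.2.isPGroup
  have no_sylow : {P | IsSylowIn p K P ∧ U ≤ P} = ∅ :=
    Set.eq_empty_of_forall_notMem fun _ h => hU (h.1.prop.1.to_le h.2)
  simp [casoloDefect, no_element, no_sylow]

theorem casoloDefect_eq_zero_of_le_normalizer (hU : IsPGroup p U) (hUK : U ≤ K)
    (hK : K ≤ normalizer (U : Set G)) : casoloDefect p K U = 0 := by
  have sylow_eq : {P | IsSylowIn p K P ∧ U ≤ P} = {P | IsSylowIn p K P} :=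
    Set.ext fun P => and_iff_left_of_imp fun hP => hP.le_of_le_normalizer hU hUK hK
  have := (ncard_setOf_isSylowIn_pos p K).ne'
  rw [casoloDefect, sylow_eq, pSubnormalizer_eq_of_le_normalizer hU hK,
    div_mul_cancel₀ _ (by exact_mod_cast this), sub_eq_zero]
  rfl

open Finset IncidenceAlgebra in
theorem sum_mu_mul_casoloDefect [DecidableEq (Subgroup G)] [LocallyFiniteOrder (Subgroup G)]
    (hUK : U ≤ K) :
    ∑ X ∈ Icc U K, mu ℚ U X * casoloDefect p K X =
      ∑ X ∈ Icc U (K ⊓ normalizer (U : Set G)),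
        mu ℚ U X * casoloDefect p (K ⊓ normalizer (U : Set G)) X := by
  classical
  simp_rw [casoloDefect, mul_sub, sum_sub_distrib, sum_mu_mul_ncard_pSubnormalizer ℚ p K U,
    mul_left_comm (mu ℚ U _), ← mul_sum, sum_mu_mul_ncard_isSylowIn_and_le,
    isSylowIn_inf_normalizer_iff hUK]
  congr 1
  by_cases hU : IsSylowIn p K U
  swap
  · simp [hU]
  have card_div {K : Subgroup G} (hU : IsSylowIn p K U) :
      (Nat.card K : ℚ) / {P | IsSylowIn p K P}.ncard =
        Nat.card (K ⊓ normalizer (U : Set G) : Subgroup G) := by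
    rw [← hU.card_inf_normalizer_mul_ncard, Nat.cast_mul, mul_div_cancel_right₀]
    exact_mod_cast (ncard_setOf_isSylowIn_pos p K).ne'
  rw [card_div hU, card_div ((isSylowIn_inf_normalizer_iff hUK).2 hU), inf_assoc, inf_idem]

theorem casoloDefect_eq_zero (hUK : U ≤ K) : casoloDefect p K U = 0 := by
  classical
  let _ : LocallyFiniteOrder (Subgroup G) := .ofFiniteIcc fun _ _ => Set.toFinite _
  induction U using WellFoundedGT.induction generalizing K with
  | _ U ih =>
  by_cases hU : IsPGroup p U
  swap
  · exact casoloDefect_eq_zero_of_not_isPGroup hU K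
  have leading {K : Subgroup G} (hUK : U ≤ K) :
      ∑ X ∈ Finset.Icc U K, IncidenceAlgebra.mu ℚ U X * casoloDefect p K X =
        casoloDefect p K U := by
    rw [Finset.sum_eq_single_of_mem U (Finset.left_mem_Icc.2 hUK), IncidenceAlgebra.mu_self,
      one_mul]
    intro X hX hne
    obtain ⟨hUX, hXK⟩ := Finset.mem_Icc.1 hX
    rw [ih X (hUX.lt_of_ne hne.symm) hXK, mul_zero]
  have hUN : U ≤ K ⊓ normalizer (U : Set G) := le_inf hUK le_normalizer
  rw [← leading hUK, sum_mu_mul_casoloDefect hUK, leading hUN]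
  exact casoloDefect_eq_zero_of_le_normalizer hU hUN inf_le_right

theorem card_pSubnormalizes_mul_card_sylow (p : ℕ) [Fact p.Prime] (U : Subgroup G) :
    Nat.card {h : G // PSubnormalizes p h U} * Nat.card (Sylow p G) =
      Nat.card G * Nat.card {S : Sylow p G // U ≤ S} := by
  have card_sylow : {P : Subgroup G | IsSylowIn p ⊤ P}.ncard = Nat.card (Sylow p G) := by
    simpa using ncard_setOf_isSylowIn_top_and_le p (⊥ : Subgroup G)
  have card_eq : (pSubnormalizer p ⊤ U).ncard = Nat.card {h : G // PSubnormalizes p h U} := by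
    simp [pSubnormalizer, ← Nat.card_coe_set_eq, Set.coe_ofPred]
  have defect := casoloDefect_eq_zero (p := p) (le_top (a := U))
  have : (Nat.card (Sylow p G) : ℚ) ≠ 0 := Nat.cast_ne_zero.2 Nat.card_pos.ne'
  rw [casoloDefect, card_sylow, card_eq, ncard_setOf_isSylowIn_top_and_le, card_top,
    sub_eq_zero] at defect
  qify
  rw [defect]
  field_simp

end Subnormalizers

theorem sum_card_subtype_comm {α β : Type*} [Fintype α] [Fintype β] (r : α → β → Prop) :
    ∑ a, Nat.card {b // r a b} = ∑ b, Nat.card {a // r a b} := by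
  classical
  simp_rw [Nat.card_eq_fintype_card, Fintype.card_subtype]
  exact Finset.sum_card_bipartiteAbove_eq_sum_card_bipartiteBelow r (s := .univ) (t := .univ)

section Tuples

variable {p : ℕ} [Fact p.Prime] {H : Type*} [Group H] [Finite H]

theorem sum_card_sylow_closure_range_le (S : Sylow p H) (ι : Type*) [Finite ι]
    [Fintype (ι → H)] :
    ∑ u : ι → H, Nat.card {P : Sylow p H // Subgroup.closure (Set.range u) ≤ P} =
      Nat.card (Sylow p H) * Nat.card S ^ Nat.card ι := by
  have := Fintype.ofFinite (Sylow p H)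
  have card_tuples (P : Sylow p H) :
      Nat.card {u : ι → H // Subgroup.closure (Set.range u) ≤ P} = Nat.card S ^ Nat.card ι := by
    rw [Nat.card_congr (S.equiv P).toEquiv, ← Nat.card_fun]
    simp_rw [closure_le, Set.range_subset_iff]
    exact Nat.card_congr (Equiv.subtypePiEquivPi (p := fun _ x => x ∈ P))
  rw [sum_card_subtype_comm, Finset.sum_congr rfl fun P _ => card_tuples P, Finset.sum_const,
    Finset.card_univ, smul_eq_mul, ← Nat.card_eq_fintype_card]

theorem card_pSubnormalizes_closure_range (S : Sylow p H) (ι : Type*) [Finite ι] :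
    Nat.card {x : H × (ι → H) // PSubnormalizes p x.1 (Subgroup.closure (Set.range x.2))} =
      Nat.card H * Nat.card S ^ Nat.card ι := by
  have := Fintype.ofFinite (ι → H)
  have by_tuple : {x : H × (ι → H) // PSubnormalizes p x.1 (Subgroup.closure (Set.range x.2))} ≃
      Σ u : ι → H, {h : H // PSubnormalizes p h (Subgroup.closure (Set.range u))} :=
    ((Equiv.prodComm _ _).subtypeEquiv fun _ => Iff.rfl).trans
      (Equiv.subtypeProdEquivSigmaSubtype fun u h =>
        PSubnormalizes p h (Subgroup.closure (Set.range u)))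
  refine Nat.eq_of_mul_eq_mul_right (Nat.card_pos (α := Sylow p H)) ?_
  rw [Nat.card_congr by_tuple, Nat.card_sigma, Finset.sum_mul]
  simp_rw [card_pSubnormalizes_mul_card_sylow]
  rw [← Finset.mul_sum, sum_card_sylow_closure_range_le S]
  ring

theorem card_sylow_mul_card_le (S : Sylow p H) :
    Nat.card (Sylow p H) * Nat.card S ≤ Nat.card H := by
  rw [S.card_eq_index_normalizer, mul_comm, ← card_mul_index (normalizer (S : Set H))]
  exact Nat.mul_le_mul_right _ (card_le_of_le (H := (S : Subgroup H)) le_normalizer)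

end Tuples

section PCore

variable {G : Type*} [Group G] [Finite G] {p : ℕ} {A B C : Subgroup G}

/-- The `p`-core `O_p(K)`, the largest normal `p`-subgroup of `K`, as a subgroup of the ambient
group. -/
def pCoreIn (p : ℕ) (K : Subgroup G) : Subgroup G :=
  sSup {M | IsPGroup p M ∧ M ≤ K ∧ K ≤ normalizer (M : Set G)}

theorem isGreatest_pCoreIn (p : ℕ) (K : Subgroup G) :
    IsGreatest {M : Subgroup G | IsPGroup p M ∧ M ≤ K ∧ K ≤ normalizer (M : Set G)}
      (pCoreIn p K) := by
  refine ⟨SupClosed.sSup_mem ?_ (Set.toFinite _) ?_ subset_rfl, fun M hM => le_sSup hM⟩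
  · rintro M ⟨hMp, hMK, hKM⟩ N ⟨hNp, hNK, hKN⟩
    exact ⟨hMp.to_sup_of_normal_right' hNp (hMK.trans hKN), sup_le hMK hNK,
      (le_inf hKM hKN).trans (normalizer_inf_normalizer_le_normalizer_sup M N)⟩
  · exact ⟨IsPGroup.of_bot, bot_le, normalizer_eq_top (H := (⊥ : Subgroup G)) ▸ le_top⟩

theorem normalizer_le_normalizer_pCoreIn (p : ℕ) (K : Subgroup G) :
    normalizer (K : Set G) ≤ normalizer (pCoreIn p K : Set G) := by
  refine le_normalizer_iff.2 fun g hg m hm => ?_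
  obtain ⟨⟨hp, hle, hnormal⟩, hmax⟩ := isGreatest_pCoreIn p K
  have conj_K := mem_normalizer_iff_map_conj_eq.1 hg
  refine hmax ⟨hp.map _, ?_, ?_⟩ (mem_map_of_mem (MulAut.conj g).toMonoidHom hm)
  · exact (map_mono hle).trans_eq conj_K
  · exact conj_K.ge.trans ((map_mono hnormal).trans (le_normalizer_map _))

theorem pCoreIn_le_of_normalIn (h : NormalIn B C) : pCoreIn p B ≤ pCoreIn p C := by
  obtain ⟨hBC, hnormal⟩ := h
  have hC : C ≤ normalizer (B : Set G) := (normal_subgroupOf_iff_le_normalizer hBC).1 hnormal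
  obtain ⟨⟨hp, hle, -⟩, -⟩ := isGreatest_pCoreIn p B
  exact (isGreatest_pCoreIn p C).2
    ⟨hp, hle.trans hBC, hC.trans (normalizer_le_normalizer_pCoreIn p B)⟩

theorem IsSubnormalIn.le_pCoreIn (hAB : IsSubnormalIn A B) (hA : IsPGroup p A) :
    A ≤ pCoreIn p B := by
  induction hAB with
  | refl => exact (isGreatest_pCoreIn p A).2 ⟨hA, le_rfl, le_normalizer⟩
  | tail _ hBC ih => exact ih.trans (pCoreIn_le_of_normalIn hBC)

end PCore

section Wreath

open SemidirectProduct

variable {n p : ℕ} {H : Type*} [Group H]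

/-- The wreath product of `H` with the cyclic group of order `n` acting by cyclic shifts. Its
standard shift is `inr (.ofAdd 1)`. -/
abbrev CyclicWreath (n : ℕ) (H : Type*) [Group H] : Type _ :=
  (ZMod n → H) ⋊[shiftHom n H] Multiplicative (ZMod n)

theorem shiftHom_apply_apply (c : Multiplicative (ZMod n)) (f : ZMod n → H) (i : ZMod n) :
    shiftHom n H c f i = f (i + c.toAdd) := by
  simp [shiftHom, MulEquiv.arrowCongr]

theorem inr_mem_zpowers_inr_one (c : Multiplicative (ZMod n)) :
    (inr c : CyclicWreath n H) ∈ zpowers (inr (.ofAdd 1)) := by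
  obtain ⟨k, hk⟩ := ZMod.intCast_surjective c.toAdd
  refine ⟨k, ?_⟩
  simp only [← map_zpow, ← ofAdd_zsmul, zsmul_one, hk, ofAdd_toAdd]

theorem isPGroup_zpowers_inr (hn : IsPGroup p (Multiplicative (ZMod n)))
    (c : Multiplicative (ZMod n)) : IsPGroup p (zpowers (inr c : CyclicWreath n H)) :=
  (hn.of_surjective _ inr.rangeRestrict_surjective).to_le (zpowers_le.2 ⟨c, rfl⟩)

theorem card_cyclicWreath [NeZero n] : Nat.card (CyclicWreath n H) = n * Nat.card H ^ n := by
  rw [SemidirectProduct.card, Nat.card_fun, mul_comm, Nat.card_congr Multiplicative.toAdd,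
    Nat.card_zmod]

theorem pSubnormalizes_coordinates {M : Subgroup (CyclicWreath n H)} (hM : IsPGroup p M)
    (inr_mem : ∀ c, inr c ∈ M) {f : ZMod n → H}
    (hf : inl f ∈ normalizer (M : Set (CyclicWreath n H))) (s : Set (ZMod n)) :
    PSubnormalizes p (f 0) (Subgroup.closure (Set.range fun i : s => (f 0)⁻¹ * f i)) := by
  let π : (ZMod n → H) →* H := Pi.evalMonoidHom (fun _ => H) 0
  refine ⟨(M.comap inl).map π, (hM.comap_of_injective _ inl_injective).map _, ?_, ?_⟩
  · rw [closure_le, Set.range_subset_iff]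
    intro i
    refine ⟨f⁻¹ * shiftHom n H (.ofAdd i) f, ?_, ?_⟩
    · have conj_mem := (mem_normalizer_iff.1 (inv_mem hf) _).1 (inr_mem (.ofAdd i))
      simpa [inl_aut, mul_assoc] using mul_mem conj_mem (inv_mem (inr_mem (.ofAdd i)))
    · simp [π, shiftHom_apply_apply]
  · exact le_normalizer_map π (mem_map_of_mem π (le_normalizer_comap inl hf))

theorem left_pSubnormalizes_of_mem_subnormalizerSet [Fact p.Prime] [NeZero n] [Finite H]
    (hn : IsPGroup p (Multiplicative (ZMod n))) {g : CyclicWreath n H}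
    (hg : g ∈ subnormalizerSet (inr (.ofAdd 1))) (s : Set (ZMod n)) :
    PSubnormalizes p (g.left 0)
      (Subgroup.closure (Set.range fun i : s => (g.left 0)⁻¹ * g.left i)) := by
  have : Finite (CyclicWreath n H) := .of_equiv _ equivProd.symm
  have x_mem := IsSubnormalIn.le_pCoreIn hg (isPGroup_zpowers_inr hn _)
  obtain ⟨⟨hp, -, hnormal⟩, -⟩ := isGreatest_pCoreIn p
    (zpowers (inr (.ofAdd 1) : CyclicWreath n H) ⊔ zpowers g)
  refine pSubnormalizes_coordinates hp (fun c => x_mem (inr_mem_zpowers_inr_one c)) (hnormal ?_) s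
  rw [eq_mul_inv_of_mul_eq (inl_left_mul_inr_right g)]
  exact mul_mem (mem_sup_right (mem_zpowers g))
    (inv_mem (mem_sup_left (inr_mem_zpowers_inr_one g.right)))

theorem eq_of_left_zero_of_inv_mul_left {g g' : CyclicWreath n H} (h_right : g.right = g'.right)
    (h_zero : g.left 0 = g'.left 0)
    (h_ne : ∀ i ≠ 0, (g.left 0)⁻¹ * g.left i = (g'.left 0)⁻¹ * g'.left i) : g = g' := by
  refine SemidirectProduct.ext (funext fun i => ?_) h_right
  rcases eq_or_ne i 0 with rfl | hi
  · exact h_zero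
  · simpa [h_zero] using h_ne i hi

theorem card_subnormalizerSet_inr_one_le [Fact p.Prime] [NeZero n] [Finite H]
    (hn : IsPGroup p (Multiplicative (ZMod n))) (S : Sylow p H) :
    Nat.card (subnormalizerSet (inr (.ofAdd 1) : CyclicWreath n H)) ≤
      n * (Nat.card H * Nat.card S ^ (n - 1)) := by
  have card_index : Nat.card ({0}ᶜ : Set (ZMod n)) = n - 1 := by
    rw [Nat.card_coe_set_eq, Set.ncard_compl, Set.ncard_singleton, Nat.card_zmod]
  have card_tuples := card_pSubnormalizes_closure_range S ({0}ᶜ : Set (ZMod n))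
  rw [card_index] at card_tuples
  rw [← card_tuples, ← congrArg (· * _) (Nat.card_zmod n), ← Nat.card_prod]
  refine Nat.card_le_card_of_injective (fun g => (g.1.right.toAdd,
    ⟨(g.1.left 0, fun i => (g.1.left 0)⁻¹ * g.1.left i),
      left_pSubnormalizes_of_mem_subnormalizerSet hn g.2 _⟩)) fun g g' h => ?_
  simp only [Prod.mk.injEq, Subtype.mk.injEq] at h
  obtain ⟨h_right, h_zero, h_ne⟩ := h
  exact Subtype.ext (eq_of_left_zero_of_inv_mul_left h_right h_zero fun i hi =>
    congrFun h_ne ⟨i, hi⟩)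

theorem spr_inr_one_le [Fact p.Prime] [NeZero n] [Finite H]
    (hn : IsPGroup p (Multiplicative (ZMod n))) (S : Sylow p H) :
    spr (inr (.ofAdd 1) : CyclicWreath n H) ≤ (Nat.card S / Nat.card H : ℚ) ^ (n - 1) := by
  have hH : (Nat.card H : ℚ) ≠ 0 := Nat.cast_ne_zero.2 Nat.card_pos.ne'
  have pow_eq : Nat.card H ^ n = Nat.card H * Nat.card H ^ (n - 1) :=
    (mul_pow_sub_one (NeZero.ne n) _).symm
  rw [spr, card_cyclicWreath, pow_eq]
  calc _ ≤ ((n * (Nat.card H * Nat.card S ^ (n - 1)) : ℕ) : ℚ) /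
        ((n * (Nat.card H * Nat.card H ^ (n - 1)) : ℕ) : ℚ) := by
        gcongr
        exact card_subnormalizerSet_inr_one_le hn S
    _ = (Nat.card S / Nat.card H : ℚ) ^ (n - 1) := by
        push_cast
        rw [mul_div_mul_left _ _ (Nat.cast_ne_zero.2 (NeZero.ne n)), mul_div_mul_left _ _ hH,
          div_pow]

end Wreath

theorem stmt5_general (p n k : ℕ) [Fact p.Prime] (hn : n = p ^ k) (H : Type*) [Group H]
    [Finite H] :
    spr (SemidirectProduct.inr (Multiplicative.ofAdd (1 : ZMod n)) :
        (ZMod n → H) ⋊[shiftHom n H] Multiplicative (ZMod n)) ≤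
      1 / ((Nat.card (Sylow p H) : ℚ)) ^ (n - 1) := by
  have : NeZero n := ⟨hn ▸ pow_ne_zero k (Fact.out : p.Prime).ne_zero⟩
  have hC : IsPGroup p (Multiplicative (ZMod n)) :=
    .of_card ((Nat.card_congr Multiplicative.toAdd).trans ((Nat.card_zmod n).trans hn))
  let S : Sylow p H := default
  have hS : (Nat.card S / Nat.card H : ℚ) ≤ 1 / Nat.card (Sylow p H) := by
    rw [div_le_div_iff₀ (Nat.cast_pos.2 Nat.card_pos) (Nat.cast_pos.2 Nat.card_pos), one_mul,
      mul_comm]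
    exact_mod_cast card_sylow_mul_card_le S
  calc _ ≤ (Nat.card S / Nat.card H : ℚ) ^ (n - 1) := spr_inr_one_le hC S
    _ ≤ (1 / Nat.card (Sylow p H) : ℚ) ^ (n - 1) := pow_le_pow_left₀ (by positivity) hS _
    _ = 1 / (Nat.card (Sylow p H) : ℚ) ^ (n - 1) := one_div_pow _ _

/-- For `G = (H₁ × ⋯ × H_p) ⋊ ⟨x⟩`, where `x` has order `p` and cyclically permutes the
`p` copies of `H`, one has `spr_G(x) ≤ 1/n_p(H)^{p-1}`. -/
theorem stmt5 (p : ℕ) [Fact p.Prime] (H : Type*) [Group H] [Finite H] :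
    spr (SemidirectProduct.inr (Multiplicative.ofAdd (1 : ZMod p)) :
        (ZMod p → H) ⋊[shiftHom p H] Multiplicative (ZMod p)) ≤
      1 / ((Nat.card (Sylow p H) : ℚ)) ^ (p - 1) :=
  stmt5_general p p 1 (pow_one p).symm H
end

section
/- Let G be a finite group, p a prime dividing |G|, and P a Sylow p-subgroup of G. Let 𝔘_p(G) denote the set of p-elements of G. Then Σ_{x ∈ 𝔘_p(G)} |S_G(x)| = |P|·|G|, where S_G(x) is the subnormalizer of ⟨x⟩ in G. -/
open Subgroup

/-!
For a `p`-element `x`, an element `g` lies in `S_G(x)` exactly when some `p`-subgroup containing `x`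
is normalized by `g`. The `g`-invariant `p`-subgroups containing `x` are closed under intersection,
so they have Euler characteristic `1` if there are any and `0` otherwise, and `|S_G(x)|` is the sum
of these Euler characteristics over `g`. Sorting chains by their least term `Q` writes that sum as
`∑ Q, lefschetzContribution p Q` over the `p`-subgroups `Q ∋ x`. If `Q` is Sylow, its contribution
is `|N_G(Q)|`. Otherwise it vanishes: `R ↦ R ⊓ N_G(Q)` does not change the Euler characteristic of
the invariant `p`-subgroups above `Q`, and by induction on the index the total inside `N_G(Q)` comes
from its Sylow subgroups alone, which all contain `Q` strictly, so it is `|N_G(Q)|` and cancels.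
Hence `|S_G(x)| = ∑_{S ∋ x} |N_G(S)|` over the Sylow subgroups `S` (Casolo's formula); summing over
`x` counts each `|N_G(S)|` exactly `|S| = |P|` times, and the orders of the Sylow normalizers add up
to `|G|`.
-/

section PosetEulerChar

open scoped Classical in
/-- The Euler characteristic of a finite set `s` in a poset, that is, of the simplicial complex
of the nonempty chains of `s`; it is defined by the recursion that sorts chains by their least
element. -/
noncomputable def posetEulerChar {α : Type*} [Preorder α] (s : Finset α) : ℤ :=
  ∑ x ∈ s.attach, (1 - posetEulerChar {y ∈ s | x.1 < y})
termination_by s.card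
decreasing_by
  exact Finset.card_lt_card (Finset.filter_ssubset.2 ⟨x.1, x.2, lt_irrefl x.1⟩)

open scoped Classical in
theorem posetEulerChar_eq_sum {α : Type*} [Preorder α] (s : Finset α) :
    posetEulerChar s = ∑ x ∈ s, (1 - posetEulerChar {y ∈ s | x < y}) := by
  rw [posetEulerChar]
  exact s.sum_attach fun x => 1 - posetEulerChar {y ∈ s | x < y}

@[simp]
theorem posetEulerChar_empty {α : Type*} [Preorder α] : posetEulerChar (∅ : Finset α) = 0 := by
  rw [posetEulerChar_eq_sum, Finset.sum_empty]

open scoped Classical in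
theorem sum_one_sub_posetEulerChar_of_upperClosed {α : Type*} [Preorder α] {s t : Finset α}
    (hts : t ⊆ s) (ht : ∀ x ∈ t, ∀ y ∈ s, x < y → y ∈ t) :
    ∑ x ∈ t, (1 - posetEulerChar {y ∈ s | x < y}) = posetEulerChar t := by
  rw [posetEulerChar_eq_sum t]
  refine Finset.sum_congr rfl fun x hx => ?_
  congr 2
  ext y
  simp only [Finset.mem_filter]
  exact ⟨fun ⟨hy, hxy⟩ => ⟨ht x hx y hy hxy, hxy⟩, fun ⟨hy, hxy⟩ => ⟨hts hy, hxy⟩⟩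

open scoped Classical in
theorem posetEulerChar_eq_one_of_isLeast {α : Type*} [PartialOrder α] {s : Finset α} {a : α}
    (ha : IsLeast (s : Set α) a) : posetEulerChar s = 1 := by
  have herase : s.erase a = {y ∈ s | a < y} := by
    ext y
    simp only [Finset.mem_erase, Finset.mem_filter]
    exact ⟨fun ⟨hne, hy⟩ => ⟨hy, lt_of_le_of_ne (ha.2 hy) hne.symm⟩,
      fun ⟨hy, hlt⟩ => ⟨hlt.ne', hy⟩⟩
  have hrest : ∑ x ∈ s.erase a, (1 - posetEulerChar {y ∈ s | x < y}) =
      posetEulerChar {y ∈ s | a < y} := by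
    rw [herase]
    refine sum_one_sub_posetEulerChar_of_upperClosed (Finset.filter_subset _ _) ?_
    intro x hx y hy hxy
    exact Finset.mem_filter.2 ⟨hy, (Finset.mem_filter.1 hx).2.trans hxy⟩
  rw [posetEulerChar_eq_sum, ← Finset.add_sum_erase s _ ha.1, hrest, sub_add_cancel]

open scoped Classical in
theorem posetEulerChar_eq_of_galoisConnection {α β : Type*} [PartialOrder α] [PartialOrder β]
    {l : α → β} {u : β → α} (gc : GaloisConnection l u) {s : Finset α} {t : Finset β}
    (hl : ∀ a ∈ s, l a ∈ t) (hu : ∀ b ∈ t, u b ∈ s) :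
    posetEulerChar s = posetEulerChar t := by
  rw [posetEulerChar_eq_sum s, posetEulerChar_eq_sum t, ← Finset.sum_fiberwise_of_maps_to hu]
  refine Finset.sum_congr rfl fun a ha => ?_
  -- The fibre of `u` over `a` is the principal filter of `l a` minus the part of `t` above `a`.
  set w : β → ℤ := fun b => 1 - posetEulerChar {y ∈ t | b < y}
  have habove : posetEulerChar {x ∈ s | a < x} = posetEulerChar {b ∈ t | a < u b} :=
    posetEulerChar_eq_of_galoisConnection gc
      (fun x hx => by
        rw [Finset.mem_filter] at hx ⊢
        exact ⟨hl x hx.1, hx.2.trans_le (gc.le_u_l x)⟩)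
      (fun b hb => by
        rw [Finset.mem_filter] at hb ⊢
        exact ⟨hu b hb.1, hb.2⟩)
  have hstrict : ∑ b ∈ t with a < u b, w b = posetEulerChar {x ∈ s | a < x} := by
    rw [habove]
    refine sum_one_sub_posetEulerChar_of_upperClosed (Finset.filter_subset _ _) ?_
    intro x hx y hy hxy
    exact Finset.mem_filter.2 ⟨hy, (Finset.mem_filter.1 hx).2.trans_le (gc.monotone_u hxy.le)⟩
  have hweak : ∑ b ∈ t with a ≤ u b, w b = 1 := by
    have hleast : IsLeast (({b ∈ t | a ≤ u b} : Finset β) : Set β) (l a) :=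
      ⟨by simpa using ⟨hl a ha, gc.le_u_l a⟩,
        fun b hb => gc.l_le (Finset.mem_filter.1 hb).2⟩
    rw [← posetEulerChar_eq_one_of_isLeast hleast]
    refine sum_one_sub_posetEulerChar_of_upperClosed (Finset.filter_subset _ _) ?_
    intro x hx y hy hxy
    exact Finset.mem_filter.2 ⟨hy, (Finset.mem_filter.1 hx).2.trans (gc.monotone_u hxy.le)⟩
  have hsplit : ∑ b ∈ t with a ≤ u b, w b =
      ∑ b ∈ t with u b = a, w b + ∑ b ∈ t with a < u b, w b := by
    rw [← Finset.sum_union (Finset.disjoint_filter.2 fun b _ h h' => h'.ne' h),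
      ← Finset.filter_or]
    simp only [le_iff_eq_or_lt, eq_comm]
  linarith
termination_by s.card
decreasing_by
  exact Finset.card_lt_card (Finset.filter_ssubset.2 ⟨a, ha, lt_irrefl a⟩)

end PosetEulerChar

section PSubgroups

variable {G : Type*} [Group G] {p : ℕ}

theorem lt_inf_normalizer_of_lt [Fact p.Prime] {Q R : Subgroup G} [Finite R]
    (hR : IsPGroup p R) (hQR : Q < R) : Q < R ⊓ normalizer (Q : Set G) := by
  have : Group.IsNilpotent R := hR.isNilpotent
  have hlt : Q.subgroupOf R < normalizer (Q.subgroupOf R : Set R) :=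
    Group.normalizerCondition_of_isNilpotent _
      (lt_top_iff_ne_top.2 fun h => hQR.not_ge (subgroupOf_eq_top.1 h))
  rw [← subgroupOf_normalizer_eq hQR.le] at hlt
  refine lt_of_le_of_ne (le_inf hQR.le le_normalizer) fun heq => hlt.ne ?_
  exact (congrArg (·.subgroupOf R) heq).trans (inf_subgroupOf_left _ _)

theorem subgroupOf_normalizer_lt_subgroupOf_normalizer [Fact p.Prime]
    {Q R : Subgroup G} [Finite R] (hR : IsPGroup p R) (hQR : Q < R) :
    Q.subgroupOf (normalizer (Q : Set G)) < R.subgroupOf (normalizer (Q : Set G)) := by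
  rw [← map_lt_map_iff_of_injective (subtype_injective _), subgroupOf_map_subtype,
    subgroupOf_map_subtype, inf_eq_left.2 le_normalizer]
  exact lt_inf_normalizer_of_lt hR hQR

theorem subgroupOf_normalizer_lt_sylow [Fact p.Prime] {Q R : Subgroup G} [Finite R]
    (hR : IsPGroup p R) (hQR : Q < R) (S : Sylow p (normalizer (Q : Set G))) :
    Q.subgroupOf (normalizer (Q : Set G)) < S := by
  have hQ : IsPGroup p (Q.subgroupOf (normalizer (Q : Set G))) := (hR.to_le hQR.le).comap_subtype
  refine lt_of_le_of_ne (hQ.le_sylow_of_normal S) fun h => ?_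
  have hlt := subgroupOf_normalizer_lt_subgroupOf_normalizer hR hQR
  rw [h] at hlt
  exact hlt.ne' (S.is_maximal' hR.comap_subtype hlt.le)

theorem index_lt_index_of_subgroupOf_lt {H N : Subgroup G} [H.FiniteIndex] (hHN : H ≤ N)
    {T : Subgroup N} (hT : H.subgroupOf N < T) : T.index < H.index :=
  have : N.FiniteIndex := finiteIndex_of_le hHN
  calc T.index < (H.subgroupOf N).index := index_strictAnti hT
    _ ≤ (H.subgroupOf N).index * N.index :=
      Nat.le_mul_of_pos_right _ (Nat.pos_of_ne_zero FiniteIndex.index_ne_zero)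
    _ = H.index := relIndex_mul_index hHN

theorem sum_card_normalizer_sylow [Fact p.Prime] [Fintype (Sylow p G)] :
    ∑ S : Sylow p G, Nat.card (normalizer (S : Set G)) = Nat.card G := by
  let P : Sylow p G := default
  have hmul (S : Sylow p G) :
      Nat.card (normalizer (S : Set G)) * Nat.card (Sylow p G) = Nat.card G := by
    rw [S.card_eq_index_normalizer, card_mul_index]
  have hconst (S : Sylow p G) :
      Nat.card (normalizer (S : Set G)) = Nat.card (normalizer (P : Set G)) :=
    Nat.eq_of_mul_eq_mul_right Nat.card_pos ((hmul S).trans (hmul P).symm)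
  rw [Finset.sum_congr rfl fun S _ => hconst S, Finset.sum_const, Finset.card_univ,
    ← Nat.card_eq_fintype_card, smul_eq_mul, mul_comm, hmul]

end PSubgroups

section Lefschetz

variable {G : Type*} [Group G] {p : ℕ}

/-- The `p`-subgroups in `U` fixed under conjugation by `g`. -/
noncomputable def invariantPSubgroups [Finite G] (p : ℕ) (U : Set (Subgroup G)) (g : G) :
    Finset (Subgroup G) :=
  (Set.toFinite {R | R ∈ U ∧ IsPGroup p R ∧ g ∈ normalizer (R : Set G)}).toFinset

@[simp]
theorem mem_invariantPSubgroups [Finite G] {U : Set (Subgroup G)} {g : G} {R : Subgroup G} :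
    R ∈ invariantPSubgroups p U g ↔ R ∈ U ∧ IsPGroup p R ∧ g ∈ normalizer (R : Set G) :=
  Set.Finite.mem_toFinset _

open scoped Classical in
theorem filter_lt_invariantPSubgroups [Finite G] {U : Set (Subgroup G)} (hU : IsUpperSet U)
    {R : Subgroup G} (hR : R ∈ U) (g : G) :
    {S ∈ invariantPSubgroups p U g | R < S} = invariantPSubgroups p (Set.Ioi R) g := by
  ext S
  simp only [Finset.mem_filter, mem_invariantPSubgroups, Set.mem_Ioi]
  exact ⟨fun ⟨⟨_, hS⟩, hRS⟩ => ⟨hRS, hS⟩, fun ⟨hRS, hS⟩ => ⟨⟨hU hRS.le hR, hS⟩, hRS⟩⟩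

open scoped Classical in
/-- The contribution of `Q` to the sum over `g` of the Euler characteristics of the posets of
`g`-invariant `p`-subgroups. -/
noncomputable def lefschetzContribution [Fintype G] (p : ℕ) (Q : Subgroup G) : ℤ :=
  ∑ g : normalizer (Q : Set G), (1 - posetEulerChar (invariantPSubgroups p (Set.Ioi Q) (g : G)))

open scoped Classical in
theorem sum_posetEulerChar_eq_sum_lefschetzContribution [Fintype G] {U : Set (Subgroup G)}
    (hU : IsUpperSet U) :
    ∑ g : G, posetEulerChar (invariantPSubgroups p U g) =
      ∑ R : Subgroup G with R ∈ U ∧ IsPGroup p R, lefschetzContribution p R := by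
  calc ∑ g : G, posetEulerChar (invariantPSubgroups p U g)
      = ∑ g : G, ∑ R ∈ invariantPSubgroups p U g,
          (1 - posetEulerChar (invariantPSubgroups p (Set.Ioi R) g)) := by
        refine Finset.sum_congr rfl fun g _ => ?_
        rw [posetEulerChar_eq_sum]
        refine Finset.sum_congr rfl fun R hR => ?_
        rw [filter_lt_invariantPSubgroups hU (mem_invariantPSubgroups.1 hR).1]
    _ = ∑ R : Subgroup G with R ∈ U ∧ IsPGroup p R, ∑ g : G with g ∈ normalizer (R : Set G),
          (1 - posetEulerChar (invariantPSubgroups p (Set.Ioi R) g)) := by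
        refine Finset.sum_comm' fun g R => ?_
        simp only [Finset.mem_filter, Finset.mem_univ, true_and, mem_invariantPSubgroups]
        tauto
    _ = ∑ R : Subgroup G with R ∈ U ∧ IsPGroup p R, lefschetzContribution p R :=
        Finset.sum_congr rfl fun R _ => Finset.sum_subtype _ (by simp) _

theorem lefschetzContribution_sylow [Fintype G] (P : Sylow p G) :
    lefschetzContribution p (P : Subgroup G) = Nat.card (normalizer (P : Set G)) := by
  have hempty (g : G) : invariantPSubgroups p (Set.Ioi (P : Subgroup G)) g = ∅ := by
    ext R
    simp only [mem_invariantPSubgroups, Set.mem_Ioi, Finset.notMem_empty, iff_false]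
    exact fun ⟨hPR, hR, _⟩ => hPR.ne' (P.is_maximal' hR hPR.le)
  simp only [lefschetzContribution, hempty, posetEulerChar_empty, sub_zero, Finset.sum_const,
    Finset.card_univ, ← Nat.card_eq_fintype_card, nsmul_eq_mul, mul_one]
  rfl

open scoped Classical in
theorem sum_lefschetzContribution_eq_sum_sylow [Fintype G] {U : Set (Subgroup G)}
    (h : ∀ Q ∈ U, ∀ R : Subgroup G, IsPGroup p R → Q < R → lefschetzContribution p Q = 0) :
    ∑ R : Subgroup G with R ∈ U ∧ IsPGroup p R, lefschetzContribution p R =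
      ∑ S : Sylow p G with S.toSubgroup ∈ U, (Nat.card (normalizer (S : Set G)) : ℤ) := by
  symm
  refine Finset.sum_of_injOn (fun S : Sylow p G => (S : Subgroup G))
    (fun S _ T _ hST => Sylow.ext hST) ?_ ?_ fun S _ => (lefschetzContribution_sylow S).symm
  · intro S hS
    simpa [S.isPGroup'] using hS
  · intro R hR hRS
    simp only [Finset.mem_filter, Finset.mem_univ, true_and] at hR
    obtain ⟨S, hS⟩ := hR.2.exists_le_sylow
    refine h R hR.1 S S.isPGroup' (lt_of_le_of_ne hS ?_)
    rintro rfl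
    exact hRS ⟨S, by simpa using hR.1, rfl⟩

theorem posetEulerChar_invariantPSubgroups_normalizer [Finite G] [Fact p.Prime] (Q : Subgroup G)
    (g : normalizer (Q : Set G)) :
    posetEulerChar (invariantPSubgroups p (Set.Ioi (Q.subgroupOf (normalizer (Q : Set G)))) g) =
      posetEulerChar (invariantPSubgroups p (Set.Ioi Q) (g : G)) := by
  set N := normalizer (Q : Set G)
  refine posetEulerChar_eq_of_galoisConnection (gc_map_comap N.subtype) ?_ ?_
  · intro R hR
    rw [mem_invariantPSubgroups] at hR ⊢
    obtain ⟨hQR, hRp, hgR⟩ := hR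
    have hlt : (Q.subgroupOf N).map N.subtype < R.map N.subtype :=
      (map_lt_map_iff_of_injective N.subtype_injective).2 hQR
    exact ⟨(map_subgroupOf_eq_of_le le_normalizer).symm.trans_lt hlt, hRp.map _,
      le_normalizer_map N.subtype (mem_map_of_mem _ hgR)⟩
  · intro R hR
    rw [mem_invariantPSubgroups] at hR ⊢
    obtain ⟨hQR, hRp, hgR⟩ := hR
    exact ⟨subgroupOf_normalizer_lt_subgroupOf_normalizer hRp hQR, hRp.comap_subtype,
      le_normalizer_comap N.subtype hgR⟩

end Lefschetz

open scoped Classical in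
theorem lefschetzContribution_eq_zero {G : Type*} [Group G] [Fintype G] {p : ℕ} [Fact p.Prime]
    {Q R : Subgroup G} (hR : IsPGroup p R) (hQR : Q < R) : lefschetzContribution p Q = 0 := by
  set N := normalizer (Q : Set G)
  set Q' : Subgroup N := Q.subgroupOf N
  have hzero : ∀ T ∈ Set.Ioi Q', ∀ T' : Subgroup N, IsPGroup p T' → T < T' →
      lefschetzContribution p T = 0 :=
    fun T hT T' hT' hTT' =>
      have : T.index < Q.index := index_lt_index_of_subgroupOf_lt le_normalizer hT
      lefschetzContribution_eq_zero hT' hTT'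
  have hsylow : ∀ S : Sylow p N, S.toSubgroup ∈ Set.Ioi Q' :=
    fun S => subgroupOf_normalizer_lt_sylow hR hQR S
  have hsum : ∑ g : N, posetEulerChar (invariantPSubgroups p (Set.Ioi Q') g) = Nat.card N := by
    rw [sum_posetEulerChar_eq_sum_lefschetzContribution (isUpperSet_Ioi Q'),
      sum_lefschetzContribution_eq_sum_sylow hzero, ← sum_card_normalizer_sylow (p := p)]
    simp only [hsylow, Finset.filter_true, Nat.cast_sum]
  calc lefschetzContribution p Q
      = ∑ g : N, (1 - posetEulerChar (invariantPSubgroups p (Set.Ioi Q') g)) := by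
        simp only [lefschetzContribution, N, Q', posetEulerChar_invariantPSubgroups_normalizer]
    _ = 0 := by
        simp [Finset.sum_sub_distrib, hsum, Nat.card_eq_fintype_card]
termination_by Q.index

section Casolo

variable {G : Type*} [Group G] {p : ℕ}

open scoped Classical in
theorem sum_posetEulerChar_invariantPSubgroups [Fintype G] [Fact p.Prime] {U : Set (Subgroup G)}
    (hU : IsUpperSet U) :
    ∑ g : G, posetEulerChar (invariantPSubgroups p U g) =
      ∑ S : Sylow p G with S.toSubgroup ∈ U, (Nat.card (normalizer (S : Set G)) : ℤ) := by
  rw [sum_posetEulerChar_eq_sum_lefschetzContribution hU]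
  exact sum_lefschetzContribution_eq_sum_sylow fun Q _ R hR hQR =>
    lefschetzContribution_eq_zero hR hQR

open scoped Classical in
theorem posetEulerChar_invariantPSubgroups_Ici [Finite G] (Q : Subgroup G) (g : G) :
    posetEulerChar (invariantPSubgroups p (Set.Ici Q) g) =
      if (invariantPSubgroups p (Set.Ici Q) g).Nonempty then 1 else 0 := by
  set s := invariantPSubgroups p (Set.Ici Q) g
  split_ifs with hs
  · obtain ⟨R₀, hR₀⟩ := hs
    have hmem {R : Subgroup G} : R ∈ s ↔ Q ≤ R ∧ IsPGroup p R ∧ g ∈ normalizer (R : Set G) :=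
      mem_invariantPSubgroups
    refine posetEulerChar_eq_one_of_isLeast (a := ⨅ R : s, (R : Subgroup G)) ⟨?_, ?_⟩
    · refine hmem.2 ⟨le_iInf fun R => (hmem.1 R.2).1,
        (hmem.1 hR₀).2.1.to_le (iInf_le_of_le ⟨R₀, hR₀⟩ le_rfl), ?_⟩
      exact iInf_normalizer_le_normalizer_iInf _ (mem_iInf.2 fun R => (hmem.1 R.2).2.2)
    · exact fun R hR => iInf_le_of_le ⟨R, hR⟩ le_rfl
  · rw [Finset.not_nonempty_iff_eq_empty.1 hs, posetEulerChar_empty]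

/-- The `p`-subgroups of `K` that are normalized by `K`. -/
def normalPSubgroups (p : ℕ) (K : Subgroup G) : Set (Subgroup G) :=
  {R | IsPGroup p R ∧ R ≤ K ∧ K ≤ normalizer (R : Set G)}

theorem sup_mem_normalPSubgroups {K R S : Subgroup G} (hR : R ∈ normalPSubgroups p K)
    (hS : S ∈ normalPSubgroups p K) : R ⊔ S ∈ normalPSubgroups p K :=
  ⟨hR.1.to_sup_of_normal_right' hS.1 (hR.2.1.trans hS.2.2), sup_le hR.2.1 hS.2.1,
    (le_inf hR.2.2 hS.2.2).trans (normalizer_inf_normalizer_le_normalizer_sup R S)⟩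

theorem map_conj_mem_normalPSubgroups {K R : Subgroup G} {g : G}
    (hg : g ∈ normalizer (K : Set G)) (hR : R ∈ normalPSubgroups p K) :
    R.map (MulAut.conj g).toMonoidHom ∈ normalPSubgroups p K := by
  have hK : K.map (MulAut.conj g).toMonoidHom = K := mem_normalizer_iff_map_conj_eq.1 hg
  exact ⟨hR.1.map _, (map_mono hR.2.1).trans hK.le,
    hK.ge.trans ((map_mono hR.2.2).trans (le_normalizer_map _))⟩

theorem exists_isGreatest_normalPSubgroups [Finite G] (p : ℕ) (K : Subgroup G) :
    ∃ R, IsGreatest (normalPSubgroups p K) R := by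
  have hbot : ⊥ ∈ normalPSubgroups p K :=
    ⟨IsPGroup.of_bot, bot_le, by rw [normalizer_eq_top]; exact le_top⟩
  obtain ⟨R, hR⟩ := (Set.toFinite (normalPSubgroups p K)).exists_maximal ⟨⊥, hbot⟩
  exact ⟨R, hR.1, fun S hS => le_sup_right.trans
    (hR.2 (sup_mem_normalPSubgroups hR.1 hS) le_sup_left)⟩

theorem normalizer_le_normalizer_of_isGreatest [Finite G] {K R : Subgroup G}
    (hR : IsGreatest (normalPSubgroups p K) R) :
    normalizer (K : Set G) ≤ normalizer (R : Set G) := fun _ hg =>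
  mem_normalizer_fintype fun _ hn =>
    hR.2 (map_conj_mem_normalPSubgroups hg hR.1) (mem_map_of_mem _ hn)

theorem exists_le_normalPSubgroups_of_isSubnormalIn [Finite G] {H K : Subgroup G}
    (hH : IsPGroup p H) (hHK : IsSubnormalIn H K) : ∃ R ∈ normalPSubgroups p K, H ≤ R := by
  induction hHK with
  | refl => exact ⟨H, ⟨hH, le_rfl, le_normalizer⟩, le_rfl⟩
  | @tail K L _ hKL ih =>
    obtain ⟨S, hS, hHS⟩ := ih
    obtain ⟨R, hR⟩ := exists_isGreatest_normalPSubgroups p K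
    refine ⟨R, ⟨hR.1.1, hR.1.2.1.trans hKL.1, ?_⟩, hHS.trans (hR.2 hS)⟩
    exact ((normal_subgroupOf_iff_le_normalizer hKL.1).1 hKL.2).trans
      (normalizer_le_normalizer_of_isGreatest hR)

theorem isSubnormalIn_of_isPGroup [Finite G] [Fact p.Prime] {H R : Subgroup G}
    (hR : IsPGroup p R) (hHR : H ≤ R) : IsSubnormalIn H R := by
  induction H using WellFoundedGT.induction with
  | ind H ih =>
    rcases hHR.eq_or_lt with rfl | hlt
    · exact Relation.ReflTransGen.refl
    · have hlt' := lt_inf_normalizer_of_lt hR hlt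
      exact Relation.ReflTransGen.head
        ⟨hlt'.le, (normal_subgroupOf_iff_le_normalizer hlt'.le).2 inf_le_right⟩
        (ih _ hlt' inf_le_left)

theorem isPElement_iff_isPGroup_zpowers [Fact p.Prime] {x : G} :
    IsPElement p x ↔ IsPGroup p (zpowers x) := by
  constructor
  · rintro ⟨k, hk⟩
    exact IsPGroup.of_card (n := k) (by rw [Nat.card_zpowers, hk])
  · intro h
    simpa only [IsPElement, orderOf_mk] using IsPGroup.iff_orderOf.1 h ⟨x, mem_zpowers x⟩

theorem mem_subnormalizerSet_iff [Finite G] [Fact p.Prime] {x g : G} (hx : IsPElement p x) :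
    g ∈ subnormalizerSet x ↔ (invariantPSubgroups p (Set.Ici (zpowers x)) g).Nonempty := by
  constructor
  · intro hg
    obtain ⟨R, hR, hxR⟩ :=
      exists_le_normalPSubgroups_of_isSubnormalIn (isPElement_iff_isPGroup_zpowers.1 hx) hg
    exact ⟨R, mem_invariantPSubgroups.2
      ⟨hxR, hR.1, hR.2.2 (mem_sup_right (mem_zpowers g))⟩⟩
  · rintro ⟨R, hR⟩
    obtain ⟨hxR, hRp, hgR⟩ := mem_invariantPSubgroups.1 hR
    set K := zpowers x ⊔ zpowers g
    have hKR : K ≤ normalizer (R : Set G) :=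
      sup_le ((Set.mem_Ici.1 hxR).trans le_normalizer) (zpowers_le.2 hgR)
    have hnormal : NormalIn (R ⊓ K) K :=
      ⟨inf_le_right, (normal_subgroupOf_iff_le_normalizer inf_le_right).2
        ((le_inf hKR le_normalizer).trans inf_normalizer_le_normalizer_inf)⟩
    exact (isSubnormalIn_of_isPGroup hRp.to_inf_left (le_inf hxR le_sup_left)).tail hnormal

open scoped Classical in
theorem card_subnormalizerSet [Fintype G] [Fact p.Prime] {x : G} (hx : IsPElement p x) :
    Nat.card (subnormalizerSet x) =
      ∑ S : Sylow p G with x ∈ S, Nat.card (normalizer (S : Set G)) := by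
  have hlefschetz := sum_posetEulerChar_invariantPSubgroups (p := p) (isUpperSet_Ici (zpowers x))
  simp only [posetEulerChar_invariantPSubgroups_Ici, ← mem_subnormalizerSet_iff hx,
    Finset.sum_boole, Set.mem_Ici, zpowers_le] at hlefschetz
  rw [Nat.card_eq_fintype_card, Fintype.card_subtype]
  exact_mod_cast hlefschetz

theorem isPElement_of_mem_sylow [Fact p.Prime] {x : G} {S : Sylow p G} (hx : x ∈ S) :
    IsPElement p x :=
  isPElement_iff_isPGroup_zpowers.2 (S.isPGroup'.to_le (zpowers_le.2 hx))

end Casolo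

open scoped Classical in
/-- The sum of `|S_G(x)|` over all `p`-elements `x` of `G` equals `|P|·|G|`. -/
theorem stmt9 {G : Type*} [Group G] [Fintype G] (p : ℕ) [Fact p.Prime]
    (hpdvd : p ∣ Nat.card G) (P : Sylow p G) :
    ∑ x ∈ Finset.univ.filter (fun x : G => IsPElement p x),
        Nat.card (subnormalizerSet x) =
      Nat.card (P : Subgroup G) * Nat.card G := by
  calc ∑ x : G with IsPElement p x, Nat.card (subnormalizerSet x)
      = ∑ x : G with IsPElement p x, ∑ S : Sylow p G with x ∈ S,
          Nat.card (normalizer (S : Set G)) :=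
        Finset.sum_congr rfl fun x hx => card_subnormalizerSet (Finset.mem_filter.1 hx).2
    _ = ∑ S : Sylow p G, ∑ x : G with x ∈ S, Nat.card (normalizer (S : Set G)) := by
        refine Finset.sum_comm' fun x S => ?_
        simpa using isPElement_of_mem_sylow
    _ = ∑ S : Sylow p G, Nat.card (P : Subgroup G) * Nat.card (normalizer (S : Set G)) := by
        refine Finset.sum_congr rfl fun S _ => ?_
        rw [Finset.sum_const, smul_eq_mul, ← Fintype.card_subtype, ← Nat.card_eq_fintype_card]
        exact congrArg (· * _) (Nat.card_congr (S.equiv P).toEquiv)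
    _ = Nat.card (P : Subgroup G) * Nat.card G := by
        rw [← Finset.mul_sum, sum_card_normalizer_sylow]
end
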